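/- Let $0 < \alpha < 1$, set $\delta = 1 - \alpha$, and let $(\Omega, \mathcal{F}, P)$ be a probability space carrying, for each $n \geq 2$, a random variable $X_n$ (the degree of a fixed vertex $v$ in the random intersection graph $G(n, m_n, p_n)$ with $p_n = (m_n n^{\alpha})^{-1/2}$) whose distribution is binomial $\mathrm{Bin}(n-1, q_n)$, where $q_n = 1 - (1 - p_n^2)^{m_n}$ and $m_n \geq 1$. Let $c > 0$ and let $a = a(c) \in (1,\infty)$ be the root of $a \log a - a + 1 = c$ in $(1,\infty)$. Then $P[X_n \geq a\, n^{\delta} \text{ for infinitely many } n] = 0$; in particular, almost surely $\liminf_{n \to \infty} X_n / n^{\delta} \leq a$. -/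

import Mathlib

open MeasureTheory Filter

lemma aux_summable (c δ : ℝ) (hc : 0 < c) (hδ : 0 < δ) :
    Summable (fun n : ℕ => Real.exp (-c * (n : ℝ) ^ δ)) := by
  have h1 := (isLittleO_exp_neg_mul_rpow_atTop hc (-2 / δ)).isBigO
  have h2 : Tendsto (fun n : ℕ => (n : ℝ) ^ δ) atTop atTop :=
    (tendsto_rpow_atTop hδ).comp tendsto_natCast_atTop_atTop
  have h3 := h1.comp_tendsto h2
  have h4 : Summable (fun n : ℕ => (n : ℝ) ^ (-2 : ℝ)) :=
    Real.summable_nat_rpow.2 (by norm_num)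
  refine summable_of_isBigO_nat h4 (h3.congr_right ?_)
  intro n
  simp only [Function.comp]
  rw [← Real.rpow_mul (Nat.cast_nonneg n)]
  congr 1
  field_simp

lemma aux_chernoff {Ω : Type} [MeasurableSpace Ω] (P : Measure Ω) (N : ℕ) (q a t : ℝ)
    (X : Ω → ℕ) (ha : 1 < a) (hq0 : 0 ≤ q) (hq1 : q ≤ 1)
    (hdist : ∀ j : ℕ,
      P {ω | X ω = j} = ENNReal.ofReal ((N.choose j : ℝ) * q ^ j * (1 - q) ^ (N - j))) :
    P {ω | t ≤ (X ω : ℝ)} ≤ ENNReal.ofReal (Real.exp (N * q * (a - 1) - t * Real.log a)) := by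
  have ha0 : 0 < a := by linarith
  have h1q : 0 ≤ 1 - q := by linarith
  set f : ℕ → ℝ := fun j => (q * a) ^ j * (1 - q) ^ (N - j) * (N.choose j : ℝ) * a ^ (-t) with hf
  have hf0 : ∀ j, 0 ≤ f j := fun j => by simp only [hf]; positivity
  have hterm : ∀ j : ℕ, P ({ω | t ≤ (X ω : ℝ)} ∩ {ω | X ω = j}) ≤ ENNReal.ofReal (f j) := by
    intro j
    by_cases hj : t ≤ (j : ℝ)
    · refine (measure_mono Set.inter_subset_right).trans ?_
      rw [hdist j]
      apply ENNReal.ofReal_le_ofReal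
      have h1 : 1 ≤ a ^ j * a ^ (-t) := by
        rw [← Real.rpow_natCast a j, ← Real.rpow_add ha0]
        exact Real.one_le_rpow ha.le (by linarith)
      have h2 : f j = ((N.choose j : ℝ) * q ^ j * (1 - q) ^ (N - j)) * (a ^ j * a ^ (-t)) := by
        simp only [hf, mul_pow]; ring
      rw [h2]
      exact le_mul_of_one_le_right (by positivity) h1
    · have : {ω | t ≤ (X ω : ℝ)} ∩ {ω | X ω = j} = ∅ := by
        ext ω
        simp only [Set.mem_inter_iff, Set.mem_setOf_eq, Set.mem_empty_iff_false, iff_false]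
        rintro ⟨h1, h2⟩
        rw [h2] at h1
        exact hj h1
      rw [this]; simp
  calc P {ω | t ≤ (X ω : ℝ)} ≤ P (⋃ j : ℕ, {ω | t ≤ (X ω : ℝ)} ∩ {ω | X ω = j}) := by
        apply measure_mono
        intro ω hω
        exact Set.mem_iUnion.2 ⟨X ω, hω, rfl⟩
    _ ≤ ∑' j : ℕ, P ({ω | t ≤ (X ω : ℝ)} ∩ {ω | X ω = j}) := measure_iUnion_le _
    _ ≤ ∑' j : ℕ, ENNReal.ofReal (f j) := ENNReal.tsum_le_tsum hterm
    _ = ∑ j ∈ Finset.range (N + 1), ENNReal.ofReal (f j) := by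
        apply tsum_eq_sum
        intro j hj
        have : N < j := by
          rw [Finset.mem_range] at hj
          omega
        simp [hf, Nat.choose_eq_zero_of_lt this]
    _ = ENNReal.ofReal (∑ j ∈ Finset.range (N + 1), f j) :=
        (ENNReal.ofReal_sum_of_nonneg (fun j _ => hf0 j)).symm
    _ ≤ _ := by
        apply ENNReal.ofReal_le_ofReal
        rw [← Finset.sum_mul, ← add_pow, sub_eq_add_neg (N * q * (a - 1)), Real.exp_add,
          Real.rpow_def_of_pos ha0]
        have h1 : (q * a + (1 - q)) ^ N ≤ Real.exp (N * q * (a - 1)) := by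
          have : q * a + (1 - q) ≤ Real.exp (q * (a - 1)) := by
            have := Real.add_one_le_exp (q * (a - 1))
            linarith
          rw [mul_assoc, Real.exp_nat_mul]
          exact pow_le_pow_left₀ (by positivity) this N
        have h2 : Real.log a * -t = -(t * Real.log a) := by ring
        rw [h2]
        exact mul_le_mul_of_nonneg_right h1 (Real.exp_pos _).le

theorem stmt_16 (α δ : ℝ) (hα0 : 0 < α) (hα1 : α < 1) (hδ : δ = 1 - α)
    (Ω : Type) [MeasurableSpace Ω] (P : Measure Ω) [IsProbabilityMeasure P]
    (m : ℕ → ℕ) (hm : ∀ n, 1 ≤ m n)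
    (p q : ℕ → ℝ)
    (hp : ∀ n, p n = ((m n : ℝ) * (n : ℝ) ^ α) ^ (-(1 / 2) : ℝ))
    (hq : ∀ n, q n = 1 - (1 - p n ^ 2) ^ m n)
    (X : ℕ → Ω → ℕ) (hX : ∀ n, Measurable (X n))
    (hdist : ∀ n, 2 ≤ n → ∀ j : ℕ,
      P {ω | X n ω = j} =
        ENNReal.ofReal (((n - 1).choose j : ℝ) * q n ^ j * (1 - q n) ^ (n - 1 - j)))
    (c a : ℝ) (hc0 : 0 < c) (ha1 : 1 < a)
    (hac : a * Real.log a - a + 1 = c) :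
    P (limsup (fun n : ℕ => {ω | a * (n : ℝ) ^ δ ≤ (X n ω : ℝ)}) atTop) = 0 ∧
      ∀ᵐ ω ∂P, liminf (fun n : ℕ => (X n ω : ℝ) / (n : ℝ) ^ δ) atTop ≤ a := by
  have hδ0 : 0 < δ := by linarith
  have hbound : ∀ n : ℕ, 2 ≤ n → P {ω | a * (n : ℝ) ^ δ ≤ (X n ω : ℝ)} ≤
      ENNReal.ofReal (Real.exp (-c * (n : ℝ) ^ δ)) := by
    intro n hn
    have hn0 : (0 : ℝ) < n := by exact_mod_cast (by omega : 0 < n)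
    have hn1 : (1 : ℝ) ≤ n := by exact_mod_cast (by omega : 1 ≤ n)
    have hm1 : (1 : ℝ) ≤ m n := by exact_mod_cast hm n
    have hna : (1 : ℝ) ≤ (n : ℝ) ^ α := Real.one_le_rpow hn1 hα0.le
    have hmn : 1 ≤ (m n : ℝ) * (n : ℝ) ^ α := one_le_mul_of_one_le_of_one_le hm1 hna
    have hp2 : p n ^ 2 = ((m n : ℝ) * (n : ℝ) ^ α)⁻¹ := by
      rw [hp, ← Real.rpow_natCast, ← Real.rpow_mul (by positivity), ← Real.rpow_neg_one]
      norm_num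
    have hp1 : p n ^ 2 ≤ 1 := by rw [hp2]; exact inv_le_one_of_one_le₀ hmn
    have hp0 : 0 ≤ p n ^ 2 := sq_nonneg _
    have hq0 : 0 ≤ q n := by
      rw [hq]
      have : (1 - p n ^ 2) ^ m n ≤ 1 := pow_le_one₀ (by linarith) (by linarith)
      linarith
    have hq1 : q n ≤ 1 := by
      rw [hq]
      have : 0 ≤ (1 - p n ^ 2) ^ m n := pow_nonneg (by linarith) _
      linarith
    have hqle : q n ≤ (n : ℝ) ^ (-α) := by
      have h := one_add_mul_le_pow (a := -(p n ^ 2)) (by linarith) (m n)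
      have h2 : (m n : ℝ) * p n ^ 2 = (n : ℝ) ^ (-α) := by
        rw [hp2, Real.rpow_neg hn0.le]
        field_simp
      rw [hq, ← h2]
      have h3 : 1 + -(p n ^ 2) = 1 - p n ^ 2 := by ring
      rw [h3] at h
      linarith
    refine (aux_chernoff P (n - 1) (q n) a _ (X n) ha1 hq0 hq1 (hdist n hn)).trans ?_
    apply ENNReal.ofReal_le_ofReal
    apply Real.exp_le_exp.2
    have h5 : ((n - 1 : ℕ) : ℝ) * q n ≤ (n : ℝ) ^ δ := by
      calc ((n - 1 : ℕ) : ℝ) * q n ≤ (n : ℝ) * (n : ℝ) ^ (-α) := by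
            apply mul_le_mul _ hqle hq0 hn0.le
            exact_mod_cast Nat.sub_le n 1
        _ = (n : ℝ) ^ δ := by
            rw [hδ, sub_eq_add_neg, Real.rpow_add hn0, Real.rpow_one]
    have h6 := mul_le_mul_of_nonneg_right h5 (by linarith : 0 ≤ a - 1)
    rw [← hac]
    linarith
  have hsum : ∑' n : ℕ, P {ω | a * (n : ℝ) ^ δ ≤ (X n ω : ℝ)} ≠ ⊤ := by
    rw [← ENNReal.summable.sum_add_tsum_nat_add' (k := 2)]
    refine ENNReal.add_ne_top.2 ⟨?_, ?_⟩
    · exact (ENNReal.sum_lt_top.2 fun i _ => measure_lt_top _ _).ne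
    · have hs := (summable_nat_add_iff 2).2 (aux_summable c δ hc0 hδ0)
      exact ne_top_of_le_ne_top hs.tsum_ofReal_ne_top
        (ENNReal.tsum_le_tsum fun n => hbound (n + 2) (by omega))
  refine ⟨measure_limsup_atTop_eq_zero hsum, ?_⟩
  filter_upwards [ae_eventually_notMem hsum] with ω hω
  apply liminf_le_of_frequently_le
  · apply Eventually.frequently
    filter_upwards [hω, eventually_ge_atTop 1] with n hn hn1
    have hn0 : (0 : ℝ) < n := by exact_mod_cast hn1
    rw [div_le_iff₀ (Real.rpow_pos_of_pos hn0 δ)]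
    simp only [Set.mem_setOf_eq, not_le] at hn
    exact hn.le
  · exact isBoundedUnder_of ⟨0, fun n => by positivity⟩
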